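/- Let t, m ≥ 1 be integers. There exist constants c > 0 and C > 0 depending only on t, m such that the following holds for all N ≥ 100. Set Q := exp((log N)^{1/10}). Let Ω be a convex subset of [−N, N]^m, and let ψ₁, …, ψ_t: ℤ^m → ℤ be affine-linear forms ψ_i(n) = n·ψ̇_i + ψ_i(0) with ψ̇_i ∈ ℤ^m and ψ_i(0) ∈ ℤ, where the vectors ψ̇₁, …, ψ̇_t are pairwise linearly independent over ℚ and each coordinate of each ψ̇_i has absolute value at most exp((log N)^{3/5}). Then for any real 2 ≤ z ≤ Q one has |∑_{n ∈ Ω ∩ ℤ^m} ∏_{i=1}^t Λ_{Cramér,z}(ψ_i(n)) − vol(Ω)·∏_{p < z} β_p| ≤ C·N^m·exp(−c·(log N)^{4/5}), where vol denotes Lebesgue measure, the product is over primes p < z, and β_p := E_{n ∈ (ℤ/pℤ)^m} ∏_{i=1}^t (p/(p−1))·1_{ψ_i(n) ≠ 0 in ℤ/pℤ} (the average over all n ∈ (ℤ/pℤ)^m, viewing each ψ_i as an affine map from (ℤ/pℤ)^m to ℤ/pℤ). -/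

import Mathlib

open scoped Classical

noncomputable section

/-- The Cramér model `Λ_{Cramér,w}(n) = ∏_{p < w, p prime} (p/(p-1))·1_{p ∤ n}`. -/
def cramer (w : ℝ) (n : ℤ) : ℝ :=
  ∏ p ∈ (Finset.range (⌈w⌉₊ + 1)).filter fun p => Nat.Prime p ∧ (p : ℝ) < w,
    if (p : ℤ) ∣ n then 0 else (p : ℝ) / ((p : ℝ) - 1)

/-- The quantity `Q = exp((log N)^{1/10})`. -/
def Qparam (N : ℝ) : ℝ := Real.exp (Real.log N ^ ((1 : ℝ) / 10))

/-- The local factor `β_p = E_{n ∈ (ℤ/pℤ)^d} ∏_i (p/(p-1))·1_{ψ_i(n) ≠ 0}`. -/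
def betaLocal (d t : ℕ) (ψlin : Fin t → Fin d → ℤ) (ψconst : Fin t → ℤ) (p : ℕ) : ℝ :=
  (∑ n ∈ Fintype.piFinset fun _ : Fin d => Finset.range p,
      ∏ i, if (p : ℤ) ∣ (∑ j, (n j : ℤ) * ψlin i j + ψconst i) then 0
        else (p : ℝ) / ((p : ℝ) - 1)) / (p : ℝ) ^ d

end

section Helpers


def esy (x : ℕ → ℝ) (k : ℕ) (P : Finset ℕ) : ℝ := ∑ T ∈ P.powersetCard k, ∏ p ∈ T, x p

lemma esy_zero (x P) : esy x 0 P = 1 := by simp [esy]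

lemma esy_insert (x : ℕ → ℝ) (k : ℕ) (P : Finset ℕ) (q : ℕ) (hq : q ∉ P) :
    esy x (k+1) (insert q P) = esy x (k+1) P + x q * esy x k P := by
  unfold esy
  rw [Finset.powersetCard_succ_insert hq, Finset.sum_union, Finset.sum_image, Finset.mul_sum]
  · congr 1
    apply Finset.sum_congr rfl
    intro T hT
    rw [Finset.prod_insert]
    exact fun h => hq ((Finset.mem_powersetCard.1 hT).1 h)
  · intro T hT T' hT' h
    have h1 : q ∉ T := fun h => hq ((Finset.mem_powersetCard.1 hT).1 h)
    have h2 : q ∉ T' := fun h => hq ((Finset.mem_powersetCard.1 hT').1 h)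
    rw [← Finset.erase_insert h1, ← Finset.erase_insert h2]
    exact congrArg (fun S => Finset.erase S q) h
  · rw [Finset.disjoint_left]
    intro T hT hT'
    obtain ⟨T', -, rfl⟩ := Finset.mem_image.1 hT'
    exact hq ((Finset.mem_powersetCard.1 hT).1 (Finset.mem_insert_self _ _))

lemma esy_nonneg (x : ℕ → ℝ) (hx : ∀ p, 0 ≤ x p) (k P) : 0 ≤ esy x k P :=
  Finset.sum_nonneg fun _ _ => Finset.prod_nonneg fun _ _ => hx _

lemma bonf_aux (x : ℕ → ℝ) (hx : ∀ p, 0 ≤ x p) (hx1 : ∀ p, x p ≤ 1) (P : Finset ℕ) :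
    ∀ r : ℕ, 0 ≤ (-1)^r * (∏ p ∈ P, (1 - x p) - ∑ k ∈ Finset.range r, (-1)^k * esy x k P) ∧
      (-1)^r * (∏ p ∈ P, (1 - x p) - ∑ k ∈ Finset.range r, (-1)^k * esy x k P) ≤ esy x r P := by
  induction P using Finset.induction_on with
  | empty =>
    intro r
    rcases r with _ | r
    · simp [esy]
    · have : ∀ k, esy x (k+1) ∅ = 0 := by
        intro k
        rw [esy, Finset.powersetCard_eq_empty.2 (by simp), Finset.sum_empty]
      rw [Finset.sum_range_succ']
      simp [this, esy_zero]
  | insert q P hq ih =>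
    intro r
    rcases r with _ | r
    · simp only [pow_zero, Finset.range_zero, Finset.sum_empty, sub_zero, one_mul, esy_zero]
      exact ⟨Finset.prod_nonneg fun p _ => by linarith [hx1 p],
        Finset.prod_le_one (fun p _ => by linarith [hx1 p]) fun p _ => by linarith [hx p]⟩
    · have e : ∑ k ∈ Finset.range (r+1), (-1)^k * esy x k (insert q P)
          = ∑ k ∈ Finset.range (r+1), (-1)^k * esy x k P
            - x q * ∑ k ∈ Finset.range r, (-1)^k * esy x k P := by
        rw [Finset.sum_range_succ', Finset.sum_range_succ' _ r, Finset.mul_sum, esy_zero, esy_zero,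
          add_sub_right_comm, ← Finset.sum_sub_distrib]
        congr 1
        apply Finset.sum_congr rfl
        intro k _
        rw [esy_insert _ _ _ _ hq]; ring
      rw [e, Finset.prod_insert hq, esy_insert _ _ _ _ hq]
      have h1 := ih (r+1)
      have h2 := ih r
      set A := ∏ p ∈ P, (1 - x p)
      set B := ∑ k ∈ Finset.range (r+1), (-1)^k * esy x k P
      set B' := ∑ k ∈ Finset.range r, (-1)^k * esy x k P
      have e2 : (-1)^(r+1) * ((1 - x q) * A - (B - x q * B'))
        = (-1)^(r+1) * (A - B) + x q * ((-1)^r * (A - B')) := by ring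
      rw [e2]
      have h3 := mul_nonneg (hx q) h2.1
      have h4 := mul_le_mul_of_nonneg_left h2.2 (hx q)
      constructor <;> linarith [h1.1, h1.2]

lemma bonf (x : ℕ → ℝ) (hx : ∀ p, 0 ≤ x p) (hx1 : ∀ p, x p ≤ 1) (P : Finset ℕ) (r : ℕ) :
    |∏ p ∈ P, (1 - x p) - ∑ k ∈ Finset.range r, (-1)^k * esy x k P| ≤ esy x r P := by
  obtain ⟨h1, h2⟩ := bonf_aux x hx hx1 P r
  rw [← abs_of_nonneg h1, abs_mul, abs_pow, abs_neg, abs_one, one_pow, one_mul] at h2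
  exact h2

/-- weighted bound of elementary symmetric sums -/
lemma esy_sum_le (x : ℕ → ℝ) (hx : ∀ p, 0 ≤ x p) (P : Finset ℕ) (r : ℕ) :
    ∑ k ∈ Finset.range (r+1), esy x k P ≤ Real.exp (∑ p ∈ P, x p) := by
  calc _ ≤ ∑ T ∈ P.powerset, ∏ p ∈ T, x p := by
        unfold esy
        rw [← Finset.sum_biUnion]
        · apply Finset.sum_le_sum_of_subset_of_nonneg
          · intro T hT
            obtain ⟨k, -, h⟩ := Finset.mem_biUnion.1 hT
            exact Finset.mem_powerset.2 (Finset.mem_powersetCard.1 h).1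
          · intro T _ _
            exact Finset.prod_nonneg fun _ _ => hx _
        · intro i _ j _ hij
          exact Finset.pairwise_disjoint_powersetCard _ hij
    _ = ∏ p ∈ P, (1 + x p) := (Finset.prod_one_add _).symm
    _ ≤ ∏ p ∈ P, Real.exp (x p) := Finset.prod_le_prod (fun p _ => by linarith [hx p])
        (fun p _ => by linarith [Real.add_one_le_exp (x p)])
    _ = _ := (Real.exp_sum _ _).symm

lemma esy_smul (x : ℕ → ℝ) (c : ℝ) (k P) : esy (fun p => c * x p) k P = c ^ k * esy x k P := by
  unfold esy
  rw [Finset.mul_sum]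
  apply Finset.sum_congr rfl
  intro T hT
  rw [Finset.prod_mul_distrib, Finset.prod_const, (Finset.mem_powersetCard.1 hT).2]

lemma esy_tail (x : ℕ → ℝ) (hx : ∀ p, 0 ≤ x p) (P : Finset ℕ) (r : ℕ) :
    esy x r P ≤ Real.exp (3 * ∑ p ∈ P, x p - r) := by
  have h := esy_sum_le (fun p => Real.exp 1 * x p) (fun p => mul_nonneg (Real.exp_pos _).le (hx p)) P r
  have h2 : esy (fun p => Real.exp 1 * x p) r P ≤ ∑ k ∈ Finset.range (r+1), esy (fun p => Real.exp 1 * x p) k P :=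
    Finset.single_le_sum (f := fun k => esy (fun p => Real.exp 1 * x p) k P)
      (fun k _ => esy_nonneg _ (fun p => mul_nonneg (Real.exp_pos _).le (hx p)) k P) (by simp)
  rw [esy_smul, ← Real.exp_nat_mul, mul_one] at h2
  rw [← Finset.mul_sum] at h
  have h3 := h2.trans h
  rw [Real.exp_sub, le_div_iff₀ (Real.exp_pos _), mul_comm]
  refine h3.trans (Real.exp_le_exp.2 ?_)
  exact mul_le_mul_of_nonneg_right Real.exp_one_lt_three.le (Finset.sum_nonneg fun p _ => hx p)

lemma esy_prod_le (P : Finset ℕ) (z : ℝ) (hz : 1 ≤ z) (hP : ∀ p ∈ P, (p:ℝ) ≤ z) (hc : (P.card : ℝ) ≤ z) (r : ℕ) :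
    ∑ k ∈ Finset.range (r+1), esy (fun p => (p:ℝ)) k P ≤ 3 * z^(2*r) := by
  have h := esy_sum_le (fun p => (z^2)⁻¹ * (p:ℝ)) (fun p => by positivity) P r
  simp only [esy_smul] at h
  have h1 : ∑ p ∈ P, (z^2)⁻¹ * (p:ℝ) ≤ 1 := by
    rw [← Finset.mul_sum]
    have : ∑ p ∈ P, (p:ℝ) ≤ P.card * z := by
      simpa using Finset.sum_le_card_nsmul P (fun p => (p:ℝ)) z hP
    rw [inv_mul_le_iff₀ (by positivity)]
    nlinarith
  have h2 := h.trans ((Real.exp_le_exp.2 h1).trans Real.exp_one_lt_three.le)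
  have h3 : z^(2*r) * ∑ k ∈ Finset.range (r+1), (z^2)⁻¹ ^ k * esy (fun p => (p:ℝ)) k P ≤ z^(2*r) * 3 :=
    mul_le_mul_of_nonneg_left h2 (by positivity)
  rw [Finset.mul_sum] at h3
  rw [mul_comm]
  refine le_trans (Finset.sum_le_sum fun k hk => ?_) h3
  have hk' : k ≤ r := by simpa [Nat.lt_succ_iff] using hk
  rw [← mul_assoc]
  refine le_mul_of_one_le_left (esy_nonneg _ (fun p => by positivity) _ _) ?_
  rw [pow_mul, inv_pow, ← div_eq_mul_inv, le_div_iff₀ (by positivity), one_mul]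
  exact pow_le_pow_right₀ (one_le_pow₀ hz) hk'
open MeasureTheory

lemma one_dim (I : Set ℝ) (hI : I.OrdConnected) (N : ℝ) (hb : I ⊆ Set.Icc (-N) N) (ρ : ℝ → ℝ) (d : ℝ)
    (hd : 0 < d) (h1 : ∀ u, ρ u ≤ u) (h2 : ∀ u, u - d < ρ u) :
    volume (ρ ⁻¹' I) ≤ volume I + ENNReal.ofReal d ∧ volume I ≤ volume (ρ ⁻¹' I) + ENNReal.ofReal d := by
  rcases I.eq_empty_or_nonempty with rfl | hne
  · simp
  have hbb : BddBelow I := ⟨-N, fun x hx => (hb hx).1⟩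
  have hba : BddAbove I := ⟨N, fun x hx => (hb hx).2⟩
  set α := sInf I
  set β := sSup I
  have hab : α ≤ β := by
    obtain ⟨x, hx⟩ := hne
    exact (csInf_le hbb hx).trans (le_csSup hba hx)
  have s1 : I ⊆ Set.Icc α β := fun x hx => ⟨csInf_le hbb hx, le_csSup hba hx⟩
  have s2 : Set.Ioo α β ⊆ I := by
    intro x hx
    obtain ⟨y, hy, hyx⟩ := exists_lt_of_csInf_lt hne hx.1
    obtain ⟨w, hw, hxw⟩ := exists_lt_of_lt_csSup hne hx.2
    exact hI.out hy hw ⟨hyx.le, hxw.le⟩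
  have v1 : volume I ≤ ENNReal.ofReal (β - α) := by
    simpa using measure_mono (μ := volume) s1
  have v2 : ENNReal.ofReal (β - α) ≤ volume I := by
    simpa using measure_mono (μ := volume) s2
  constructor
  · have s3 : ρ ⁻¹' I ⊆ Set.Icc α (β + d) := by
      intro u hu
      have := s1 hu
      exact ⟨this.1.trans (h1 u), by linarith [this.2, h2 u]⟩
    calc _ ≤ ENNReal.ofReal (β + d - α) := by simpa using measure_mono (μ := volume) s3
      _ = ENNReal.ofReal (β - α) + ENNReal.ofReal d := by
        rw [← ENNReal.ofReal_add (by linarith) hd.le]; congr 1; ring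
      _ ≤ _ := by gcongr
  · have s4 : Set.Ioo (α + d) β ⊆ ρ ⁻¹' I := by
      intro u hu
      apply s2
      exact ⟨by linarith [hu.1, h2 u], by linarith [hu.2, h1 u]⟩
    calc _ ≤ ENNReal.ofReal (β - α) := v1
      _ = ENNReal.ofReal ((β - (α + d)) + d) := by congr 1; ring
      _ ≤ ENNReal.ofReal (β - (α + d)) + ENNReal.ofReal d := ENNReal.ofReal_add_le
      _ ≤ _ := by gcongr; simpa using measure_mono (μ := volume) s4

lemma slice_bound (n : ℕ) (i : Fin (n+1)) (A B : Set (Fin (n+1) → ℝ)) (hA : MeasurableSet A) (hB : MeasurableSet B)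
    (δ : ENNReal) (X : Set (Fin n → ℝ)) (hX : MeasurableSet X)
    (h : ∀ y, volume {u : ℝ | i.insertNth (α := fun _ => ℝ) u y ∈ A} ≤ volume {u : ℝ | i.insertNth (α := fun _ => ℝ) u y ∈ B} + δ)
    (h0 : ∀ y u, i.insertNth (α := fun _ => ℝ) u y ∈ A → y ∈ X) :
    volume A ≤ volume B + δ * volume X := by
  have mp := (volume_preserving_piFinSuccAbove (fun _ : Fin (n+1) => ℝ) i).symm
  have key : ∀ S : Set (Fin (n+1) → ℝ), MeasurableSet S → volume S = ∫⁻ y : Fin n → ℝ, volume {u : ℝ | i.insertNth (α := fun _ => ℝ) u y ∈ S} := by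
    intro S hS
    rw [← mp.measure_preimage hS.nullMeasurableSet]
    rw [Measure.volume_eq_prod, Measure.prod_apply_symm (mp.measurable hS)]
    rfl
  rw [key A hA, key B hB, ← lintegral_indicator_const hX, ← lintegral_add_right _ (measurable_const.indicator hX)]
  apply lintegral_mono
  intro y
  by_cases hy : y ∈ X
  · simpa [hy] using h y
  · have : {u : ℝ | i.insertNth (α := fun _ => ℝ) u y ∈ A} = ∅ := by
      ext u; simpa using fun hu => hy (h0 y u hu)
    simp only [this]; simp

/-- partial rounding -/
def phi {m : ℕ} (ρ : Fin m → ℝ → ℝ) (s : Finset (Fin m)) (x : Fin m → ℝ) : Fin m → ℝ :=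
  fun j => if j ∈ s then ρ j (x j) else x j

lemma phi_meas {m : ℕ} (ρ : Fin m → ℝ → ℝ) (hρ : ∀ j, Measurable (ρ j)) (s : Finset (Fin m)) :
    Measurable (phi ρ s) := by
  rw [measurable_pi_iff]
  intro j
  unfold phi
  split_ifs
  · exact (hρ j).comp (measurable_pi_apply j)
  · exact measurable_pi_apply j

lemma phi_step (n : ℕ) (ρ : Fin (n+1) → ℝ → ℝ) (hρ : ∀ j, Measurable (ρ j)) (d : ℝ) (hd : 0 < d)
    (h1 : ∀ j u, ρ j u ≤ u) (h2 : ∀ j u, u - d < ρ j u) (N : ℝ)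
    (K : Set (Fin (n+1) → ℝ)) (hK : MeasurableSet K) (hc : Convex ℝ K)
    (hb : K ⊆ Set.Icc (fun _ => -N) (fun _ => N)) (s : Finset (Fin (n+1))) (i) (hi : i ∉ s) :
    volume (phi ρ s ⁻¹' K) ≤ volume (phi ρ (insert i s) ⁻¹' K) + ENNReal.ofReal d * ENNReal.ofReal (2 * N + d) ^ n ∧
    volume (phi ρ (insert i s) ⁻¹' K) ≤ volume (phi ρ s ⁻¹' K) + ENNReal.ofReal d * ENNReal.ofReal (2 * N + d) ^ n := by
  have vX : volume (Set.Icc (fun _ : Fin n => -N) (fun _ => N + d)) = ENNReal.ofReal (2 * N + d) ^ n := by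
    rw [Real.volume_Icc_pi]
    simp only [Finset.prod_const, Finset.card_univ, Fintype.card_fin]
    congr 2; ring
  have hph : ∀ (s' : Finset (Fin (n+1))) (y : Fin n → ℝ) (u : ℝ), phi ρ s' (i.insertNth (α := fun _ => ℝ) u y) ∈ K →
      y ∈ Set.Icc (fun _ : Fin n => -N) (fun _ => N + d) := by
    intro s' y u hu
    have hu := hb hu
    constructor
    · intro j
      have := hu.1 (i.succAbove j)
      simp only [phi, Fin.insertNth_apply_succAbove] at this
      split_ifs at this
      · exact this.trans (h1 _ _)
      · exact this
    · intro j
      have := hu.2 (i.succAbove j)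
      simp only [phi, Fin.insertNth_apply_succAbove] at this
      split_ifs at this
      · linarith [h2 (i.succAbove j) (y j)]
      · linarith
  have slA : ∀ y u, phi ρ s (i.insertNth (α := fun _ => ℝ) u y) = i.insertNth (α := fun _ => ℝ) u (fun j => phi ρ s (i.insertNth (α := fun _ => ℝ) 0 y) (i.succAbove j)) := by
    intro y u
    ext j
    refine Fin.succAboveCases i ?_ (fun k => ?_) j
    · simp [phi, hi]
    · simp [phi]
  have slB : ∀ y u, phi ρ (insert i s) (i.insertNth (α := fun _ => ℝ) u y) = i.insertNth (α := fun _ => ℝ) (ρ i u) (fun j => phi ρ s (i.insertNth (α := fun _ => ℝ) 0 y) (i.succAbove j)) := by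
    intro y u
    ext j
    refine Fin.succAboveCases i ?_ (fun k => ?_) j
    · simp [phi]
    · simp [phi, Fin.succAbove_ne]
  have main : ∀ y, volume {u : ℝ | i.insertNth (α := fun _ => ℝ) u y ∈ phi ρ (insert i s) ⁻¹' K} ≤ volume {u : ℝ | i.insertNth (α := fun _ => ℝ) u y ∈ phi ρ s ⁻¹' K} + ENNReal.ofReal d ∧ volume {u : ℝ | i.insertNth (α := fun _ => ℝ) u y ∈ phi ρ s ⁻¹' K} ≤ volume {u : ℝ | i.insertNth (α := fun _ => ℝ) u y ∈ phi ρ (insert i s) ⁻¹' K} + ENNReal.ofReal d := by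
    intro y
    obtain ⟨w, hw⟩ : ∃ w : Fin n → ℝ, w = fun j => phi ρ s (i.insertNth (α := fun _ => ℝ) 0 y) (i.succAbove j) := ⟨_, rfl⟩
    have slA' := slA y
    have slB' := slB y
    rw [← hw] at slA' slB'
    simp only [Set.mem_preimage, slA', slB']
    refine one_dim {u : ℝ | i.insertNth (α := fun _ => ℝ) u w ∈ K} ?_ N ?_ (ρ i) d hd (h1 i) (h2 i)
    · rw [← convex_iff_ordConnected]
      intro u hu v hv a b ha hb' hab
      have := hc hu hv ha hb' hab
      simp only [Set.mem_ofPred_eq]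
      convert this using 1
      ext j
      refine Fin.succAboveCases i ?_ (fun k => ?_) j
      · simp
      · simp [← add_mul, hab]
    · intro u hu
      have := hb hu
      have h3 := this.1 i
      have h4 := this.2 i
      simp at h3 h4
      exact ⟨h3, h4⟩
  rw [← vX]
  have mA := phi_meas ρ hρ s hK
  have mB := phi_meas ρ hρ (insert i s) hK
  exact ⟨slice_bound n i _ _ mA mB _ _ measurableSet_Icc (fun y => (main y).2) (hph s),
    slice_bound n i _ _ mB mA _ _ measurableSet_Icc (fun y => (main y).1) (hph _)⟩

lemma phi_all (n : ℕ) (ρ : Fin (n+1) → ℝ → ℝ) (hρ : ∀ j, Measurable (ρ j)) (d : ℝ) (hd : 0 < d)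
    (h1 : ∀ j u, ρ j u ≤ u) (h2 : ∀ j u, u - d < ρ j u) (N : ℝ)
    (K : Set (Fin (n+1) → ℝ)) (hK : MeasurableSet K) (hc : Convex ℝ K)
    (hb : K ⊆ Set.Icc (fun _ => -N) (fun _ => N)) (s : Finset (Fin (n+1))) :
    volume K ≤ volume (phi ρ s ⁻¹' K) + s.card * (ENNReal.ofReal d * ENNReal.ofReal (2 * N + d) ^ n) ∧
    volume (phi ρ s ⁻¹' K) ≤ volume K + s.card * (ENNReal.ofReal d * ENNReal.ofReal (2 * N + d) ^ n) := by
  induction s using Finset.induction_on with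
  | empty => 
    have : phi ρ ∅ ⁻¹' K = K := by
      have : phi ρ ∅ = id := by funext x j; simp [phi]
      rw [this]; rfl
    simp [this]
  | insert i s hi ih =>
    obtain ⟨a, b⟩ := phi_step n ρ hρ d hd h1 h2 N K hK hc hb s i hi
    rw [Finset.card_insert_of_notMem hi]
    push_cast
    rw [add_mul, one_mul]
    constructor
    · refine ih.1.trans ?_
      refine (add_le_add_left a _).trans (le_of_eq ?_)
      ring
    · refine b.trans ?_
      refine (add_le_add_left ih.2 _).trans (le_of_eq ?_)
      ring

/-- lattice points of a convex set in a residue class -/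
noncomputable def cnt (m : ℕ) (N : ℝ) (Ω : Set (Fin m → ℝ)) (d : ℕ) (a : Fin m → ℤ) : Finset (Fin m → ℤ) :=
  (Finset.Icc (fun _ : Fin m => -⌈N⌉) fun _ => ⌈N⌉).filter
    (fun n => (fun i => (n i : ℝ)) ∈ Ω ∧ ∀ j, (d : ℤ) ∣ n j - a j)

lemma rnd_iff (d : ℕ) (hd : 0 < d) (a n : ℤ) (h : (d:ℤ) ∣ n - a) (u : ℝ) :
    (a:ℝ) + d * ⌊(u - a) / d⌋ = n ↔ u ∈ Set.Ico (n:ℝ) (n + d) := by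
  have hd' : (0:ℝ) < d := by exact_mod_cast hd
  obtain ⟨k, hk⟩ := h
  have hn : n = a + d * k := by linarith
  subst hn
  push_cast
  rw [add_right_inj, mul_right_inj' hd'.ne', Int.cast_inj, Int.floor_eq_iff, le_div_iff₀ hd', div_lt_iff₀ hd', Set.mem_Ico]
  constructor <;> rintro ⟨h1, h2⟩ <;> constructor <;> linarith

lemma vol_round (m : ℕ) (N : ℝ) (K : Set (Fin m → ℝ)) (hb : K ⊆ Set.Icc (fun _ => -N) (fun _ => N))
    (d : ℕ) (hd : 0 < d) (a : Fin m → ℤ) :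
    volume (phi (fun j u => (a j : ℝ) + d * ⌊(u - a j) / d⌋) Finset.univ ⁻¹' K)
      = (cnt m N K d a).card * (d : ENNReal) ^ m := by
  have e : phi (fun j u => (a j : ℝ) + d * ⌊(u - a j) / d⌋) Finset.univ ⁻¹' K
      = ⋃ n ∈ cnt m N K d a, Set.pi Set.univ fun j => Set.Ico (n j : ℝ) (n j + d) := by
    ext x
    simp only [Set.mem_preimage, Set.mem_iUnion, exists_prop]
    constructor
    · intro hx
      refine ⟨fun j => a j + d * ⌊(x j - a j) / d⌋, ?_, ?_⟩
      · have hx' := hb hx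
        simp only [cnt, Finset.mem_filter, Finset.mem_Icc]
        refine ⟨⟨fun j => ?_, fun j => ?_⟩, ?_, ?_⟩
        · have := hx'.1 j
          simp only [phi, Finset.mem_univ, if_true] at this
          have h2 : -(N : ℝ) ≤ ((a j + d * ⌊(x j - a j) / d⌋ : ℤ) : ℝ) := by push_cast; exact this
          have h3 := h2.trans' (neg_le_neg (Int.le_ceil N))
          exact_mod_cast h3
        · have := hx'.2 j
          simp only [phi, Finset.mem_univ, if_true] at this
          have h2 : ((a j + d * ⌊(x j - a j) / d⌋ : ℤ) : ℝ) ≤ N := by push_cast; exact this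
          exact_mod_cast h2.trans (Int.le_ceil N)
        · convert hx using 1
          funext j
          simp [phi]
        · intro j; simp
      · intro j _
        exact (rnd_iff d hd (a j) _ (by simp) (x j)).1 (by push_cast; rfl)
    · rintro ⟨n, hn, hx⟩
      simp only [cnt, Finset.mem_filter] at hn
      convert hn.2.1 using 1
      funext j
      simp only [phi, Finset.mem_univ, if_true]
      exact (rnd_iff d hd (a j) _ (hn.2.2 j) (x j)).2 (hx j trivial)
  rw [e, measure_biUnion_finset]
  · have : ∀ n : Fin m → ℤ, volume (Set.pi Set.univ fun j => Set.Ico (n j : ℝ) (n j + d)) = (d : ENNReal) ^ m := by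
      intro n
      rw [Real.volume_pi_Ico]; simp
    simp [this]
  · intro n hn n' hn' hne
    rw [Function.onFun, Set.disjoint_left]
    intro x hx hx'
    apply hne
    simp only [cnt, Finset.coe_filter, Set.mem_ofPred_eq] at hn hn'
    funext j
    have h1 := (rnd_iff d hd (a j) _ (hn.2.2 j) (x j)).2 (hx j trivial)
    have h2 := (rnd_iff d hd (a j) _ (hn'.2.2 j) (x j)).2 (hx' j trivial)
    exact_mod_cast h1.symm.trans h2
  · intro n _
    exact MeasurableSet.univ_pi fun j => measurableSet_Ico

lemma geo_meas (n : ℕ) (N : ℝ) (K : Set (Fin (n+1) → ℝ)) (hK : MeasurableSet K) (hc : Convex ℝ K)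
    (hb : K ⊆ Set.Icc (fun _ => -N) (fun _ => N)) (d : ℕ) (hd : 0 < d) (hdN : d ≤ N) (a : Fin (n+1) → ℤ) :
    |(cnt (n+1) N K d a).card * (d : ℝ) ^ (n+1) - (volume K).toReal| ≤ (n+1) * (d * (3 * N) ^ n) := by
  have hd' : (0:ℝ) < d := by exact_mod_cast hd
  have hN : 0 < N := hd'.trans_le hdN
  have fl : ∀ (j : Fin (n+1)) (u : ℝ), (⌊(u - a j) / d⌋ : ℝ) * d ≤ u - a j ∧ u - a j < (⌊(u - a j) / d⌋ + 1 : ℝ) * d := by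
    intro j u
    rw [← le_div_iff₀ hd', ← div_lt_iff₀ hd']
    exact ⟨Int.floor_le _, Int.lt_floor_add_one _⟩
  have := phi_all n (fun j u => (a j : ℝ) + d * ⌊(u - a j) / d⌋) (fun j => by fun_prop) d hd' 
    (fun j u => by have := (fl j u).1; linarith) (fun j u => by have := (fl j u).2; linarith) N K hK hc hb Finset.univ
  rw [vol_round _ _ _ hb d hd] at this
  have hfin : volume K ≠ ⊤ := ne_top_of_le_ne_top (by simp [Real.volume_Icc_pi]) (measure_mono hb)
  obtain ⟨h1, h2⟩ := this
  have hE : ((Finset.univ : Finset (Fin (n+1))).card : ENNReal) * (ENNReal.ofReal d * ENNReal.ofReal (2 * N + d) ^ n)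
      = ENNReal.ofReal ((n+1) * (d * (2 * N + d)^n)) := by
    rw [ENNReal.ofReal_mul (by positivity), ENNReal.ofReal_mul (by positivity), ENNReal.ofReal_pow (by positivity)]
    congr 1
    rw [← Nat.cast_succ, ENNReal.ofReal_natCast]; simp
  have hC : ((cnt (n+1) N K d a).card * (d : ENNReal) ^ (n+1)) = ENNReal.ofReal ((cnt (n+1) N K d a).card * (d : ℝ) ^ (n+1)) := by
    rw [ENNReal.ofReal_mul (by positivity), ENNReal.ofReal_pow (by positivity)]; simp
  rw [hE, hC, ← ENNReal.ofReal_toReal hfin, ← ENNReal.ofReal_add (by positivity) (by positivity),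
    ENNReal.ofReal_le_ofReal_iff (by positivity)] at h1 h2
  have hle : (n+1) * (d * (2 * N + d)^n) ≤ (n+1) * (d * (3 * N) ^ n) := by
    gcongr; linarith
  rw [abs_le]
  constructor <;> linarith

lemma geo (n : ℕ) (N : ℝ) (Ω : Set (Fin (n+1) → ℝ)) (hc : Convex ℝ Ω)
    (hb : Ω ⊆ Set.Icc (fun _ => -N) (fun _ => N)) (d : ℕ) (hd : 0 < d) (hdN : d ≤ N) (a : Fin (n+1) → ℤ) :
    |(cnt (n+1) N Ω d a).card * (d : ℝ) ^ (n+1) - (volume Ω).toReal| ≤ (n+1) * (d * (3 * N) ^ n) := by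
  have hfin : volume Ω ≠ ⊤ := ne_top_of_le_ne_top (by simp [Real.volume_Icc_pi]) (measure_mono hb)
  have hI := geo_meas n N (interior Ω) isOpen_interior.measurableSet hc.interior (interior_subset.trans hb) d hd hdN a
  set F : Set (Fin (n+1) → ℝ) := (fun (x : Fin (n+1) → ℤ) i => (x i : ℝ)) '' (cnt (n+1) N Ω d a : Set _)
  have hF : F.Finite := (Finset.finite_toSet _).image _
  have hFs : F ⊆ Ω := by
    rintro _ ⟨x, hx, rfl⟩
    simp only [cnt, Finset.coe_filter, Set.mem_ofPred_eq] at hx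
    exact hx.2.1
  have hFO : convexHull ℝ F ⊆ Ω := convexHull_min hFs hc
  have hH := geo_meas n N (convexHull ℝ F) (hF.isCompact_convexHull ℝ).measurableSet (convex_convexHull ℝ F) (hFO.trans hb) d hd hdN a
  have c1 : (cnt (n+1) N Ω d a).card ≤ (cnt (n+1) N (convexHull ℝ F) d a).card := by
    apply Finset.card_le_card
    intro x hx
    have hx' := hx
    simp only [cnt, Finset.mem_filter] at hx ⊢
    exact ⟨hx.1, subset_convexHull ℝ F ⟨x, hx', rfl⟩, hx.2.2⟩
  have c2 : (cnt (n+1) N (interior Ω) d a).card ≤ (cnt (n+1) N Ω d a).card := by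
    apply Finset.card_le_card
    intro x hx
    simp only [cnt, Finset.mem_filter] at hx ⊢
    exact ⟨hx.1, interior_subset hx.2.1, hx.2.2⟩
  have v1 : (volume (convexHull ℝ F)).toReal ≤ (volume Ω).toReal :=
    ENNReal.toReal_mono hfin (measure_mono hFO)
  have v2 : volume (interior Ω) = volume Ω := measure_congr (interior_ae_eq_of_null_frontier (hc.addHaar_frontier volume))
  rw [v2] at hI
  rw [abs_le] at hI hH ⊢
  have hd' : (0:ℝ) ≤ (d:ℝ)^(n+1) := by positivity
  have c1' := mul_le_mul_of_nonneg_right (Nat.cast_le (α := ℝ).2 c1) hd'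
  have c2' := mul_le_mul_of_nonneg_right (Nat.cast_le (α := ℝ).2 c2) hd'
  constructor <;> linarith

/-- periodicity -/
def Per {m : ℕ} (d : ℕ) (f : (Fin m → ℤ) → ℝ) : Prop :=
  ∀ n n' : Fin m → ℤ, (∀ j, (d : ℤ) ∣ n j - n' j) → f n = f n'

/-- average over residues -/
noncomputable def avg {m : ℕ} (d : ℕ) (f : (Fin m → ℤ) → ℝ) : ℝ :=
  (∑ n ∈ Fintype.piFinset fun _ : Fin m => Finset.range d, f fun j => (n j : ℤ)) / (d : ℝ) ^ m

lemma avg_crt {m : ℕ} (d q : ℕ) (hd : 0 < d) (hq : 0 < q) (co : Nat.Coprime d q) (f h : (Fin m → ℤ) → ℝ)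
    (hf : Per d f) (hh : Per q h) : avg (d * q) (fun n => f n * h n) = avg d f * avg q h := by
  unfold avg
  rw [div_mul_div_comm]
  congr 1
  swap
  · push_cast; ring
  rw [Finset.sum_mul_sum, ← Finset.sum_product']
  apply Finset.sum_nbij' (fun n => (fun j => n j % d, fun j => n j % q))
    (fun ab j => (Nat.chineseRemainder co (ab.1 j) (ab.2 j) : ℕ))
  · intro n hn
    simp [Nat.mod_lt, hd, hq]
  · intro ab hab
    simp [Nat.chineseRemainder_lt_mul co _ _ hd.ne' hq.ne']
  · intro n hn
    funext j
    simp only [Fintype.mem_piFinset, Finset.mem_range] at hn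
    have := Nat.chineseRemainder_modEq_unique co (a := n j % d) (b := n j % q) (z := n j)
      (Nat.mod_modEq _ _).symm (Nat.mod_modEq _ _).symm
    exact (Nat.ModEq.eq_of_lt_of_lt this (hn j) (Nat.chineseRemainder_lt_mul co _ _ hd.ne' hq.ne')).symm
  · intro ab hab
    simp only [Finset.mem_product, Fintype.mem_piFinset, Finset.mem_range] at hab
    ext j
    · have := (Nat.chineseRemainder co (ab.1 j) (ab.2 j)).2.1
      exact Eq.trans this (Nat.mod_eq_of_lt (hab.1 j))
    · have := (Nat.chineseRemainder co (ab.1 j) (ab.2 j)).2.2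
      exact Eq.trans this (Nat.mod_eq_of_lt (hab.2 j))
  · intro n hn
    refine congrArg₂ (· * ·) ?_ ?_
    · apply hf
      intro j
      simpa using Int.dvd_self_sub_emod
    · apply hh
      intro j
      simpa using Int.dvd_self_sub_emod

lemma per_prod {m : ℕ} (x : ℕ → (Fin m → ℤ) → ℝ) (T : Finset ℕ) (hx : ∀ p ∈ T, Per p (x p)) :
    Per (∏ p ∈ T, p) (fun n => ∏ p ∈ T, x p n) := by
  intro n n' h
  apply Finset.prod_congr rfl
  intro p hp
  apply hx p hp
  intro j
  exact (Int.natCast_dvd_natCast.2 (Finset.dvd_prod_of_mem (fun p => p) hp)).trans (h j)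

lemma avg_prod {m : ℕ} (x : ℕ → (Fin m → ℤ) → ℝ) (T : Finset ℕ) (hT : ∀ p ∈ T, p.Prime) (hx : ∀ p ∈ T, Per p (x p)) :
    avg (∏ p ∈ T, p) (fun n => ∏ p ∈ T, x p n) = ∏ p ∈ T, avg p (x p) := by
  induction T using Finset.induction_on with
  | empty => simp [avg]
  | insert q T hq ih =>
    have hT' := fun p hp => hT p (Finset.mem_insert_of_mem hp)
    have hx' := fun p hp => hx p (Finset.mem_insert_of_mem hp)
    simp only [Finset.prod_insert hq]
    rw [avg_crt, ih hT' hx']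
    · exact (hT q (Finset.mem_insert_self _ _)).pos
    · exact Finset.prod_pos fun p hp => (hT' p hp).pos
    · apply Nat.Coprime.prod_right
      intro p hp
      rw [Nat.coprime_primes (hT q (Finset.mem_insert_self _ _)) (hT' p hp)]
      rintro rfl
      exact hq hp
    · exact hx q (Finset.mem_insert_self _ _)
    · exact per_prod x T hx'

lemma sum_periodic (n : ℕ) (N : ℝ) (Ω : Set (Fin (n+1) → ℝ)) (hc : Convex ℝ Ω)
    (hb : Ω ⊆ Set.Icc (fun _ => -N) (fun _ => N)) (d : ℕ) (hd : 0 < d) (hdN : d ≤ N)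
    (f : (Fin (n+1) → ℤ) → ℝ) (hf : Per d f) (h0 : ∀ x, 0 ≤ f x) (h1 : ∀ x, f x ≤ 1) :
    |∑ x ∈ (Finset.Icc (fun _ : Fin (n+1) => -⌈N⌉) fun _ => ⌈N⌉).filter
              (fun n => (fun i => (n i : ℝ)) ∈ Ω), f x - (volume Ω).toReal * avg d f|
      ≤ (n+1) * (d * (3 * N) ^ n) := by
  have hd' : (0:ℝ) < d := by exact_mod_cast hd
  have hdz : (0:ℤ) < d := by exact_mod_cast hd
  rw [← Finset.sum_fiberwise_of_maps_to (t := Fintype.piFinset fun _ : Fin (n+1) => Finset.range d)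
    (g := fun (x : Fin (n+1) → ℤ) j => (x j % (d:ℤ)).toNat)]
  swap
  · intro x hx
    simp only [Fintype.mem_piFinset, Finset.mem_range]
    intro j
    have := Int.emod_lt_of_pos (x j) hdz
    have := Int.emod_nonneg (x j) hdz.ne'
    omega
  have e : ∀ a ∈ Fintype.piFinset fun _ : Fin (n+1) => Finset.range d,
      ∑ x ∈ ((Finset.Icc (fun _ : Fin (n+1) => -⌈N⌉) fun _ => ⌈N⌉).filter
              (fun n => (fun i => (n i : ℝ)) ∈ Ω)).filter (fun x => (fun j => (x j % (d:ℤ)).toNat) = a), f x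
        = (cnt (n+1) N Ω d (fun j => a j)).card * f (fun j => a j) := by
    intro a ha
    simp only [Fintype.mem_piFinset, Finset.mem_range] at ha
    rw [← nsmul_eq_mul, ← Finset.sum_const]
    have : ((Finset.Icc (fun _ : Fin (n+1) => -⌈N⌉) fun _ => ⌈N⌉).filter
              (fun n => (fun i => (n i : ℝ)) ∈ Ω)).filter (fun x => (fun j => (x j % (d:ℤ)).toNat) = a)
        = cnt (n+1) N Ω d (fun j => a j) := by
      ext x
      simp only [cnt, Finset.mem_filter, and_assoc, and_congr_right_iff]
      intro _ _
      rw [funext_iff]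
      apply forall_congr'
      intro j
      have h1 := Int.emod_nonneg (x j) hdz.ne'
      have h2 := ha j
      have h3 : (a j : ℤ) % d = a j := Int.emod_eq_of_lt (by positivity) (by exact_mod_cast h2)
      have h4 : (x j % (d:ℤ)).toNat = a j ↔ (a j : ℤ) % d = x j % d := by omega
      rw [h4]
      exact Int.modEq_iff_dvd
    rw [this]
    apply Finset.sum_congr rfl
    intro x hx
    simp only [cnt, Finset.mem_filter] at hx
    exact hf _ _ hx.2.2
  rw [Finset.sum_congr rfl e, avg, mul_div_assoc', Finset.mul_sum, Finset.sum_div, ← Finset.sum_sub_distrib]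
  calc _ ≤ ∑ a ∈ Fintype.piFinset fun _ : Fin (n+1) => Finset.range d, (n+1) * (d * (3 * N) ^ n) / (d:ℝ)^(n+1) := by
        refine (Finset.abs_sum_le_sum_abs _ _).trans (Finset.sum_le_sum fun a ha => ?_)
        have h := geo n N Ω hc hb d hd hdN (fun j => a j)
        have e1 : (cnt (n+1) N Ω d (fun j => a j)).card * f (fun j => a j) - (volume Ω).toReal * f (fun j => a j) / (d:ℝ)^(n+1)
          = f (fun j => a j) * (((cnt (n+1) N Ω d (fun j => a j)).card * (d:ℝ)^(n+1) - (volume Ω).toReal) / (d:ℝ)^(n+1)) := by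
          field_simp
        rw [e1, abs_mul, abs_of_nonneg (h0 _), abs_div, abs_of_pos (show (0:ℝ) < (d:ℝ)^(n+1) by positivity)]
        refine (mul_le_of_le_one_left (by positivity) (h1 _)).trans ?_
        gcongr
    _ = _ := by
        rw [Finset.sum_const, Fintype.card_piFinset]
        simp
        field_simp

lemma core (n : ℕ) (N : ℝ) (Ω : Set (Fin (n+1) → ℝ)) (hc : Convex ℝ Ω)
    (hb : Ω ⊆ Set.Icc (fun _ => -N) (fun _ => N)) (P : Finset ℕ) (hP : ∀ p ∈ P, p.Prime) (r : ℕ)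
    (hr : ∀ T ⊆ P, T.card ≤ r → ((∏ p ∈ T, p : ℕ) : ℝ) ≤ N)
    (x : ℕ → (Fin (n+1) → ℤ) → ℝ) (hx : ∀ p, Per p (x p)) (x0 : ∀ p y, 0 ≤ x p y) (x1 : ∀ p y, x p y ≤ 1) :
    |∑ y ∈ (Finset.Icc (fun _ : Fin (n+1) => -⌈N⌉) fun _ => ⌈N⌉).filter
              (fun n => (fun i => (n i : ℝ)) ∈ Ω), ∏ p ∈ P, (1 - x p y)
        - (volume Ω).toReal * ∏ p ∈ P, (1 - avg p (x p))|
      ≤ (n+1) * (3 * N) ^ n * ∑ k ∈ Finset.range (r+1), esy (fun p => (p:ℝ)) k P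
        + 2 * (volume Ω).toReal * esy (fun p => avg p (x p)) r P := by
  set S := (Finset.Icc (fun _ : Fin (n+1) => -⌈N⌉) fun _ => ⌈N⌉).filter
              (fun n => (fun i => (n i : ℝ)) ∈ Ω)
  set V := (volume Ω).toReal
  have hV : 0 ≤ V := ENNReal.toReal_nonneg
  set g : ℕ → ℝ := fun p => avg p (x p)
  have g0 : ∀ p, 0 ≤ g p := fun p => div_nonneg (Finset.sum_nonneg fun _ _ => x0 _ _) (by positivity)
  have g1 : ∀ p, g p ≤ 1 := by
    intro p
    apply div_le_one_of_le₀ _ (by positivity)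
    refine (Finset.sum_le_card_nsmul _ _ 1 fun _ _ => x1 _ _).trans ?_
    rw [Fintype.card_piFinset]; simp
  have R : ∀ k ≤ r, |∑ y ∈ S, esy (fun p => x p y) k P - V * esy g k P| ≤ (n+1) * (3 * N) ^ n * esy (fun p => (p:ℝ)) k P := by
    intro k hk
    unfold esy
    rw [Finset.sum_comm, Finset.mul_sum, Finset.mul_sum, ← Finset.sum_sub_distrib]
    refine (Finset.abs_sum_le_sum_abs _ _).trans (Finset.sum_le_sum fun T hT => ?_)
    obtain ⟨hT1, hT2⟩ := Finset.mem_powersetCard.1 hT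
    have hTp := fun p hp => hP p (hT1 hp)
    have := sum_periodic n N Ω hc hb (∏ p ∈ T, p) (Finset.prod_pos fun p hp => (hTp p hp).pos)
      (hr T hT1 (hT2.trans_le hk)) _ (per_prod x T fun p _ => hx p) (fun y => Finset.prod_nonneg fun p _ => x0 p y)
      (fun y => Finset.prod_le_one (fun p _ => x0 p y) fun p _ => x1 p y)
    rw [avg_prod x T hTp fun p _ => hx p] at this
    refine this.trans (le_of_eq ?_)
    push_cast; ring
  have B1 : |∑ y ∈ S, ∏ p ∈ P, (1 - x p y) - ∑ y ∈ S, ∑ k ∈ Finset.range r, (-1)^k * esy (fun p => x p y) k P|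
      ≤ ∑ y ∈ S, esy (fun p => x p y) r P := by
    rw [← Finset.sum_sub_distrib]
    exact (Finset.abs_sum_le_sum_abs _ _).trans (Finset.sum_le_sum fun y _ => bonf _ (fun p => x0 p y) (fun p => x1 p y) P r)
  have B2 : |V * ∏ p ∈ P, (1 - g p) - V * ∑ k ∈ Finset.range r, (-1)^k * esy g k P| ≤ V * esy g r P := by
    rw [← mul_sub, abs_mul, abs_of_nonneg hV]
    exact mul_le_mul_of_nonneg_left (bonf g g0 g1 P r) hV
  have B3 : |∑ y ∈ S, ∑ k ∈ Finset.range r, (-1)^k * esy (fun p => x p y) k P - V * ∑ k ∈ Finset.range r, (-1)^k * esy g k P|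
      ≤ (n+1) * (3 * N) ^ n * ∑ k ∈ Finset.range r, esy (fun p => (p:ℝ)) k P := by
    rw [Finset.sum_comm, Finset.mul_sum, Finset.mul_sum, ← Finset.sum_sub_distrib]
    refine (Finset.abs_sum_le_sum_abs _ _).trans (Finset.sum_le_sum fun k hk => ?_)
    refine le_trans (le_of_eq ?_) (R k (Finset.mem_range.1 hk).le)
    rw [← Finset.mul_sum, mul_left_comm, ← mul_sub, abs_mul, abs_pow, abs_neg, abs_one, one_pow, one_mul]
  have B4 := R r le_rfl
  rw [Finset.sum_range_succ, mul_add]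
  rw [abs_le] at B1 B2 B3 B4 ⊢
  constructor <;> linarith [B1.1, B1.2, B2.1, B2.2, B3.1, B3.2, B4.1, B4.2]

/-- indicator that some form is divisible by p -/
noncomputable def xb {m t : ℕ} (ψlin : Fin t → Fin m → ℤ) (ψconst : Fin t → ℤ) (p : ℕ) (n : Fin m → ℤ) : ℝ :=
  if ∃ i, (p : ℤ) ∣ (∑ j, n j * ψlin i j + ψconst i) then 1 else 0

lemma dvd_per {m t : ℕ} (ψlin : Fin t → Fin m → ℤ) (ψconst : Fin t → ℤ) (p : ℕ) (i : Fin t) (n n' : Fin m → ℤ)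
    (h : ∀ j, (p : ℤ) ∣ n j - n' j) :
    (p : ℤ) ∣ (∑ j, n j * ψlin i j + ψconst i) ↔ (p : ℤ) ∣ (∑ j, n' j * ψlin i j + ψconst i) := by
  have : (p : ℤ) ∣ (∑ j, n j * ψlin i j + ψconst i) - (∑ j, n' j * ψlin i j + ψconst i) := by
    rw [add_sub_add_right_eq_sub, ← Finset.sum_sub_distrib]
    apply Finset.dvd_sum
    intro j _
    rw [← sub_mul]
    exact (h j).mul_right _
  exact (dvd_iff_dvd_of_dvd_sub this)

lemma xb_per {m t : ℕ} (ψlin : Fin t → Fin m → ℤ) (ψconst : Fin t → ℤ) (p : ℕ) : Per p (xb ψlin ψconst p) := by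
  intro n n' h
  unfold xb
  simp only [dvd_per ψlin ψconst p _ n n' h]

lemma prod_xb {m t : ℕ} (ψlin : Fin t → Fin m → ℤ) (ψconst : Fin t → ℤ) (p : ℕ) (n : Fin m → ℤ) (c : ℝ) :
    (∏ i, if (p : ℤ) ∣ (∑ j, n j * ψlin i j + ψconst i) then 0 else c) = c ^ t * (1 - xb ψlin ψconst p n) := by
  unfold xb
  split_ifs with h
  · obtain ⟨i, hi⟩ := h
    rw [sub_self, mul_zero]
    exact Finset.prod_eq_zero (Finset.mem_univ i) (if_pos hi)
  · push Not at h
    rw [Finset.prod_congr rfl (fun i _ => if_neg (h i))]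
    simp

lemma beta_eq {m t : ℕ} (ψlin : Fin t → Fin m → ℤ) (ψconst : Fin t → ℤ) (p : ℕ) (hp : 0 < p) :
    betaLocal m t ψlin ψconst p = ((p:ℝ) / ((p:ℝ) - 1)) ^ t * (1 - avg p (xb ψlin ψconst p)) := by
  unfold betaLocal avg
  have hp' : (0:ℝ) < p := by exact_mod_cast hp
  have e : ∀ n : Fin m → ℕ, _ := fun n => prod_xb ψlin ψconst p (fun j => (n j : ℤ)) ((p:ℝ) / ((p:ℝ) - 1))
  rw [Finset.sum_congr rfl (fun n _ => e n), ← Finset.mul_sum, Finset.sum_sub_distrib, mul_div_assoc, sub_div]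
  congr 2
  rw [Finset.sum_const, Fintype.card_piFinset]
  simp [hp.ne']

lemma count_le {m t : ℕ} (ψlin : Fin t → Fin m → ℤ) (ψconst : Fin t → ℤ) (p : ℕ) (hp : p.Prime) (i : Fin t)
    (h : ∃ j, ¬ (p : ℤ) ∣ ψlin i j) :
    ((Fintype.piFinset fun _ : Fin m => Finset.range p).filter
      (fun n => (p : ℤ) ∣ (∑ j, (n j : ℤ) * ψlin i j + ψconst i))).card * p ≤ p ^ m := by
  obtain ⟨j, hj⟩ := h
  have h1 : ((Fintype.piFinset fun _ : Fin m => Finset.range p).filter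
      (fun n => (p : ℤ) ∣ (∑ j, (n j : ℤ) * ψlin i j + ψconst i))).card
      ≤ (Fintype.piFinset fun l : Fin m => if l = j then {0} else Finset.range p).card := by
    apply Finset.card_le_card_of_injOn (fun n => Function.update n j 0)
    · intro n hn
      simp only [Finset.coe_filter, Set.mem_ofPred_eq, Fintype.mem_piFinset, Finset.mem_range] at hn
      simp only [Finset.mem_coe, Fintype.mem_piFinset]
      intro l
      by_cases hl : l = j
      · subst hl; simp
      · simp [hl, hn.1 l]
    · intro n hn n' hn' hnn
      simp only [Finset.coe_filter, Set.mem_ofPred_eq, Fintype.mem_piFinset, Finset.mem_range] at hn hn'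
      have off : ∀ l, l ≠ j → n l = n' l := by
        intro l hl
        have := congrFun hnn l
        simpa [hl] using this
      have hd := dvd_sub hn.2 hn'.2
      rw [add_sub_add_right_eq_sub, ← Finset.sum_sub_distrib, Finset.sum_eq_single j] at hd
      · rw [← sub_mul] at hd
        have hd2 := ((Nat.prime_iff_prime_int.1 hp).dvd_or_dvd hd).resolve_right hj
        have h3 : n' j ≡ n j [MOD p] := by
          rw [← Int.natCast_modEq_iff]
          exact Int.modEq_iff_dvd.2 hd2
        have h4 := Nat.ModEq.eq_of_lt_of_lt h3 (hn'.1 j) (hn.1 j)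
        funext l
        by_cases hl : l = j
        · rw [hl, h4]
        · exact off l hl
      · intro l _ hl
        rw [off l hl, sub_self]
      · simp
  refine (Nat.mul_le_mul_right p h1).trans (le_of_eq ?_)
  rw [Fintype.card_piFinset, ← Finset.prod_erase_mul _ _ (Finset.mem_univ j)]
  rw [Finset.prod_congr rfl (g := fun _ => p)]
  · simp only [if_true, Finset.card_singleton, mul_one, Finset.prod_const, Finset.card_erase_of_mem (Finset.mem_univ j), Finset.card_univ, Fintype.card_fin]
    rw [← pow_succ]
    congr 1
    have := j.pos
    omega
  · intro l hl
    simp [Finset.ne_of_mem_erase hl]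

lemma g_bound {m t : ℕ} (ψlin : Fin t → Fin m → ℤ) (ψconst : Fin t → ℤ) (p : ℕ) (hp : p.Prime) :
    (∀ y, xb ψlin ψconst p y = 1) ∨ avg p (xb ψlin ψconst p) ≤ t * (1 / (p:ℝ)) := by
  have hp' : (0:ℝ) < p := by exact_mod_cast hp.pos
  by_cases hall : ∃ i, (∀ j, (p:ℤ) ∣ ψlin i j) ∧ (p:ℤ) ∣ ψconst i
  · left
    obtain ⟨i, h1, h2⟩ := hall
    intro y
    unfold xb
    rw [if_pos]
    exact ⟨i, dvd_add (Finset.dvd_sum fun j _ => (h1 j).mul_left _) h2⟩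
  right
  push Not at hall
  unfold avg
  rw [div_le_iff₀ (by positivity)]
  calc _ ≤ ∑ n ∈ Fintype.piFinset fun _ : Fin m => Finset.range p,
        ∑ i, (if (p : ℤ) ∣ (∑ j, (n j : ℤ) * ψlin i j + ψconst i) then (1:ℝ) else 0) := by
        apply Finset.sum_le_sum
        intro n _
        unfold xb
        split_ifs with h
        · obtain ⟨i, hi⟩ := h
          calc (1:ℝ) = if (p : ℤ) ∣ (∑ j, (n j : ℤ) * ψlin i j + ψconst i) then (1:ℝ) else 0 := (if_pos hi).symm
            _ ≤ _ := Finset.single_le_sum (f := fun i => if (p : ℤ) ∣ (∑ j, (n j : ℤ) * ψlin i j + ψconst i) then (1:ℝ) else 0)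
              (fun i _ => by split_ifs <;> norm_num) (Finset.mem_univ i)
        · exact Finset.sum_nonneg fun i _ => by split_ifs <;> norm_num
    _ = ∑ i : Fin t, (((Fintype.piFinset fun _ : Fin m => Finset.range p).filter
      (fun n => (p : ℤ) ∣ (∑ j, (n j : ℤ) * ψlin i j + ψconst i))).card : ℝ) := by
        rw [Finset.sum_comm]
        apply Finset.sum_congr rfl
        intro i _
        rw [Finset.sum_boole]
    _ ≤ ∑ i : Fin t, (1 / (p:ℝ)) * p ^ m := by
        apply Finset.sum_le_sum
        intro i _
        by_cases hj : ∃ j, ¬ (p : ℤ) ∣ ψlin i j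
        · have := count_le ψlin ψconst p hp i hj
          rw [one_div, inv_mul_eq_div, le_div_iff₀ hp']
          exact_mod_cast this
        · push Not at hj
          rw [Finset.filter_eq_empty_iff.2]
          · simp only [Finset.card_empty, Nat.cast_zero]; positivity
          · intro n _ hn
            exact hall i hj ((dvd_add_right (Finset.dvd_sum fun j _ => (hj j).mul_left _)).1 hn)
    _ = _ := by simp; ring

lemma sum_inv_le (z : ℝ) (hz : 1 ≤ z) (P : Finset ℕ) (hP : ∀ p ∈ P, p.Prime ∧ (p:ℝ) < z) :
    ∑ p ∈ P, 1 / (p:ℝ) ≤ 1 + Real.log z ∧ (P.card : ℝ) ≤ z := by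
  have hs : P ⊆ Finset.Icc 1 ⌊z⌋₊ := by
    intro p hp
    rw [Finset.mem_Icc]
    exact ⟨(hP p hp).1.pos, Nat.le_floor (hP p hp).2.le⟩
  constructor
  · refine le_trans ?_ (harmonic_floor_le_one_add_log z hz)
    rw [harmonic_eq_sum_Icc]
    push_cast
    simp only [one_div]
    exact Finset.sum_le_sum_of_subset_of_nonneg hs fun _ _ _ => by positivity
  · have := Finset.card_le_card hs
    rw [Nat.card_Icc, Nat.add_sub_cancel] at this
    exact (Nat.cast_le.2 this).trans (Nat.floor_le (by linarith))

lemma W_le (t : ℕ) (P : Finset ℕ) (hP : ∀ p ∈ P, p.Prime) :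
    ∏ p ∈ P, ((p:ℝ) / ((p:ℝ) - 1)) ^ t ≤ Real.exp (2 * t * ∑ p ∈ P, 1 / (p:ℝ)) := by
  rw [Finset.mul_sum, Real.exp_sum]
  apply Finset.prod_le_prod
  · intro p hp
    have : (2:ℝ) ≤ p := by exact_mod_cast (hP p hp).two_le
    have : 0 ≤ (p:ℝ) / ((p:ℝ) - 1) := div_nonneg (by linarith) (by linarith)
    positivity
  · intro p hp
    have h2 : (2:ℝ) ≤ p := by exact_mod_cast (hP p hp).two_le
    have h0 : 0 ≤ (p:ℝ) / ((p:ℝ) - 1) := div_nonneg (by linarith) (by linarith)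
    have e : (2 * t * (1 / (p:ℝ))) = t * (2 / p) := by ring
    rw [e, Real.exp_nat_mul]
    refine pow_le_pow_left₀ h0 ?_ t
    refine le_trans ?_ (Real.add_one_le_exp _)
    rw [div_le_iff₀ (by linarith)]
    have : (2 / (p:ℝ) + 1) * (p - 1) = p + (p - 2) / p := by field_simp; ring
    rw [this]
    have : 0 ≤ ((p:ℝ) - 2) / p := div_nonneg (by linarith) (by linarith)
    linarith

lemma numeric (n t : ℕ) (N y z H W V S2 e : ℝ) (r : ℕ) (hy : 1 ≤ y) (hN : N = Real.exp (y^10))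
    (hr1 : (r:ℝ) ≤ y^8/4) (hr2 : y^8/4 - 1 ≤ r) (hz : 1 ≤ z) (hzy : z ≤ Real.exp y) (hH : H ≤ 1 + y)
    (hW0 : 0 ≤ W) (hW : W ≤ Real.exp (2 * t * H)) (hV : V ≤ (2*N)^(n+1)) (hS : S2 ≤ 3 * z^(2*r))
    (he0 : 0 ≤ e) (he : e ≤ Real.exp (3 * (t * H) - r)) :
    W * ((n+1) * (3 * N)^n * S2 + 2 * V * e) ≤
      ((3 * (n+1) * 3^n + 2 * 2^(n+1)) * Real.exp (5*t+1+50*t^2)) * N^(n+1) * Real.exp (-(1/8) * y^8) := by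
  have hNpos : 0 < N := hN ▸ Real.exp_pos _
  have ht : (0:ℝ) ≤ t := by positivity
  have hy89 : y^9 ≤ y^10 := pow_le_pow_right₀ hy (by norm_num)
  have hy810 : y^8 ≤ y^10 := pow_le_pow_right₀ hy (by norm_num)
  have hy28 : y^2 ≤ y^8 := pow_le_pow_right₀ hy (by norm_num)
  have htH : t * H ≤ t * (1 + y) := mul_le_mul_of_nonneg_left hH ht
  have hty : 5 * t * y ≤ y^8/8 + 50*t^2 := by nlinarith [sq_nonneg (y - 20 * t)]
  have hz2 : z^(2*r) ≤ Real.exp (y^10/2) := by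
    calc z^(2*r) ≤ (Real.exp y)^(2*r) := pow_le_pow_left₀ (by linarith) hzy _
      _ = Real.exp ((2*r : ℕ) * y) := (Real.exp_nat_mul _ _).symm
      _ ≤ _ := by
        apply Real.exp_le_exp.2
        push_cast
        nlinarith
  have hNn : N^n * Real.exp (y^10/2) = N^(n+1) * Real.exp (-(y^10/2)) := by
    rw [pow_succ N n, mul_assoc]
    congr 1
    rw [hN, ← Real.exp_add]; congr 1; ring
  have b1 : W * Real.exp (-(y^10/2)) ≤ Real.exp (5*t+1+50*t^2) * Real.exp (-(1/8) * y^8) := by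
    refine (mul_le_mul_of_nonneg_right hW (Real.exp_pos _).le).trans ?_
    rw [← Real.exp_add, ← Real.exp_add]
    apply Real.exp_le_exp.2
    nlinarith
  have b2 : W * e ≤ Real.exp (5*t+1+50*t^2) * Real.exp (-(1/8) * y^8) := by
    refine (mul_le_mul hW he he0 (Real.exp_pos _).le).trans ?_
    rw [← Real.exp_add, ← Real.exp_add]
    apply Real.exp_le_exp.2
    nlinarith
  set Y := Real.exp (5*t+1+50*t^2) * Real.exp (-(1/8) * y^8)
  calc W * ((n+1) * (3 * N)^n * S2 + 2 * V * e)
      ≤ W * ((n+1) * (3 * N)^n * (3 * Real.exp (y^10/2)) + 2 * (2*N)^(n+1) * e) := by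
        gcongr
        linarith
    _ = 3 * (n+1) * 3^n * (W * (N^n * Real.exp (y^10/2))) + 2 * 2^(n+1) * N^(n+1) * (W * e) := by
        rw [mul_pow, mul_pow]; ring
    _ = 3 * (n+1) * 3^n * N^(n+1) * (W * Real.exp (-(y^10/2))) + 2 * 2^(n+1) * N^(n+1) * (W * e) := by
        rw [hNn]; ring
    _ ≤ 3 * (n+1) * 3^n * N^(n+1) * Y + 2 * 2^(n+1) * N^(n+1) * Y := by gcongr
    _ = _ := by ring

end Helpers

theorem linear_equations_in_cramer_model (t m : ℕ) (ht : 1 ≤ t) (hm : 1 ≤ m) :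
    ∃ c C : ℝ, 0 < c ∧ 0 < C ∧ ∀ N : ℝ, 100 ≤ N →
      ∀ (ψlin : Fin t → Fin m → ℤ) (ψconst : Fin t → ℤ),
        (∀ i j, i ≠ j → ∀ a b : ℤ, (∀ x, a * ψlin i x + b * ψlin j x = 0) → a = 0 ∧ b = 0) →
        (∀ i j, |(ψlin i j : ℝ)| ≤ Real.exp (Real.log N ^ ((3 : ℝ) / 5))) →
      ∀ Ω : Set (Fin m → ℝ), Convex ℝ Ω →
        Ω ⊆ Set.Icc (fun _ => -N) (fun _ => N) →
      ∀ z : ℝ, 2 ≤ z → z ≤ Qparam N →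
        |(∑ n ∈ (Finset.Icc (fun _ : Fin m => -⌈N⌉) fun _ => ⌈N⌉).filter
              (fun n => (fun i => (n i : ℝ)) ∈ Ω),
            ∏ i, cramer z (∑ j, n j * ψlin i j + ψconst i))
          - (MeasureTheory.volume Ω).toReal *
              ∏ p ∈ (Finset.range (⌈z⌉₊ + 1)).filter
                  (fun p => Nat.Prime p ∧ (p : ℝ) < z),
                betaLocal m t ψlin ψconst p|
          ≤ C * N ^ m * Real.exp (-c * Real.log N ^ ((4 : ℝ) / 5)) := by
  obtain ⟨n, rfl⟩ : ∃ n, m = n + 1 := ⟨m - 1, by omega⟩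
  refine ⟨1/8, (3 * (n+1) * 3^n + 2 * 2^(n+1)) * Real.exp (5*t+1+50*t^2), by norm_num, by positivity, ?_⟩
  intro N hN ψlin ψconst _ _ Ω hc hb z hz hzQ
  have hN0 : (0:ℝ) < N := by linarith
  have hL : 1 ≤ Real.log N := by
    rw [Real.le_log_iff_exp_le hN0]
    linarith [Real.exp_one_lt_three]
  set y : ℝ := Real.log N ^ ((1:ℝ)/10) with hydef
  have hy : 1 ≤ y := Real.one_le_rpow hL (by norm_num)
  have hy10 : y ^ 10 = Real.log N := by
    rw [hydef, ← Real.rpow_natCast, ← Real.rpow_mul (by linarith)]; norm_num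
  have hy8 : y ^ 8 = Real.log N ^ ((4:ℝ)/5) := by
    rw [hydef, ← Real.rpow_natCast, ← Real.rpow_mul (by linarith)]; norm_num
  have hNy : N = Real.exp (y^10) := by rw [hy10, Real.exp_log hN0]
  have hzy : z ≤ Real.exp y := hzQ
  rw [← hy8]
  set P := (Finset.range (⌈z⌉₊ + 1)).filter (fun p => Nat.Prime p ∧ (p : ℝ) < z) with hPdef
  have hP : ∀ p ∈ P, p.Prime ∧ (p:ℝ) < z := fun p hp => (Finset.mem_filter.1 hp).2
  have hPp : ∀ p ∈ P, p.Prime := fun p hp => (hP p hp).1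
  set x : ℕ → (Fin (n+1) → ℤ) → ℝ := xb ψlin ψconst with hxdef
  set W := ∏ p ∈ P, ((p:ℝ) / ((p:ℝ) - 1)) ^ t with hWdef
  have e1 : ∀ v : Fin (n+1) → ℤ, ∏ i, cramer z (∑ j, v j * ψlin i j + ψconst i) = W * ∏ p ∈ P, (1 - x p v) := by
    intro v
    unfold cramer
    rw [Finset.prod_comm, hWdef, ← Finset.prod_mul_distrib]
    apply Finset.prod_congr rfl
    intro p hp
    exact prod_xb ψlin ψconst p v _
  have e2 : ∏ p ∈ P, betaLocal (n+1) t ψlin ψconst p = W * ∏ p ∈ P, (1 - avg p (x p)) := by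
    rw [hWdef, ← Finset.prod_mul_distrib]
    exact Finset.prod_congr rfl fun p hp => beta_eq ψlin ψconst p (hPp p hp).pos
  rw [Finset.sum_congr rfl (fun v _ => e1 v), e2, ← Finset.mul_sum, mul_left_comm, ← mul_sub, abs_mul]
  have hW0 : 0 ≤ W := Finset.prod_nonneg fun p hp => by
    have : (2:ℝ) ≤ p := by exact_mod_cast (hPp p hp).two_le
    have : 0 ≤ (p:ℝ) / ((p:ℝ) - 1) := div_nonneg (by linarith) (by linarith)
    positivity
  rw [abs_of_nonneg hW0]
  by_cases hbad : ∃ p ∈ P, ∀ v, x p v = 1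
  · obtain ⟨p, hp, hv⟩ := hbad
    have z1 : ∀ v : Fin (n+1) → ℤ, ∏ p ∈ P, (1 - x p v) = 0 := fun v =>
      Finset.prod_eq_zero hp (by rw [hv, sub_self])
    have z2 : ∏ p ∈ P, (1 - avg p (x p)) = 0 := by
      apply Finset.prod_eq_zero hp
      have hp0 := (hPp p hp).ne_zero
      simp only [avg, hv, Finset.sum_const, Fintype.card_piFinset]
      simp [hp0]
    simp only [z1, z2, Finset.sum_const_zero, mul_zero, sub_zero, abs_zero]
    positivity
  push Not at hbad
  have hg : ∀ p ∈ P, avg p (x p) ≤ t * (1 / (p:ℝ)) := by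
    intro p hp
    rcases g_bound ψlin ψconst p (hPp p hp) with h | h
    · obtain ⟨v, hv⟩ := hbad p hp
      exact absurd (h v) hv
    · exact h
  have x0 : ∀ p v, 0 ≤ x p v := by
    intro p v; rw [hxdef]; unfold xb; split_ifs <;> norm_num
  have x1 : ∀ p v, x p v ≤ 1 := by
    intro p v; rw [hxdef]; unfold xb; split_ifs <;> norm_num
  have g0 : ∀ p, 0 ≤ avg p (x p) := fun p => div_nonneg (Finset.sum_nonneg fun _ _ => x0 _ _) (by positivity)
  set r := ⌊y^8/4⌋₊
  have hr1 : (r:ℝ) ≤ y^8/4 := Nat.floor_le (by positivity)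
  have hr2 : y^8/4 - 1 ≤ r := (Nat.sub_one_lt_floor _).le
  obtain ⟨hH, hcard⟩ := sum_inv_le z (by linarith) P hP
  have hlog : Real.log z ≤ y := (Real.log_le_iff_le_exp (by linarith)).2 hzy
  have hy89 : y^9 ≤ y^10 := pow_le_pow_right₀ hy (by norm_num)
  have hrN : ∀ T ⊆ P, T.card ≤ r → ((∏ p ∈ T, p : ℕ) : ℝ) ≤ N := by
    intro T hT hTr
    push_cast
    calc ∏ p ∈ T, (p:ℝ) ≤ ∏ p ∈ T, Real.exp y := Finset.prod_le_prod (fun p _ => by positivity)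
          (fun p hp => (hP p (hT hp)).2.le.trans hzy)
      _ = Real.exp (T.card * y) := by rw [Finset.prod_const, Real.exp_nat_mul]
      _ ≤ N := by
        rw [hNy]
        apply Real.exp_le_exp.2
        have : (T.card : ℝ) ≤ r := by exact_mod_cast hTr
        have h9 : 0 ≤ y^9 := by positivity
        nlinarith
  have hcore := core n N Ω hc hb P hPp r hrN x (fun p => xb_per ψlin ψconst p) x0 x1
  have hV : (MeasureTheory.volume Ω).toReal ≤ (2*N)^(n+1) := by
    have h1 : MeasureTheory.volume Ω ≤ ENNReal.ofReal ((2*N)^(n+1)) := by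
      refine (MeasureTheory.measure_mono hb).trans (le_of_eq ?_)
      rw [Real.volume_Icc_pi, ENNReal.ofReal_pow (by positivity)]
      simp only [Finset.prod_const, Finset.card_univ, Fintype.card_fin]
      congr 2; ring
    exact ENNReal.toReal_le_of_le_ofReal (by positivity) h1
  have he : esy (fun p => avg p (x p)) r P ≤ Real.exp (3 * (t * ∑ p ∈ P, 1 / (p:ℝ)) - r) := by
    refine (esy_tail _ g0 P r).trans (Real.exp_le_exp.2 ?_)
    have := Finset.sum_le_sum hg
    rw [← Finset.mul_sum] at this
    linarith
  refine (mul_le_mul_of_nonneg_left hcore hW0).trans ?_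
  exact numeric n t N y z _ W _ _ _ r hy hNy hr1 hr2 (by linarith) hzy (hH.trans (by linarith)) hW0 (W_le t P hPp) hV
    (esy_prod_le P z (by linarith) (fun p hp => (hP p hp).2.le) hcard r) (esy_nonneg _ g0 _ _) he
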